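/- arXiv:2008.10101 — 2 statements merged into one kernel-verified Lean document; each statement's English description precedes it below -/
import Mathlib

section
/- Let (J, 𝒜) be a standard Borel space, let v : J × J → ℝ be a bounded nonnegative Borel measurable function taking only integer values, let c ∈ ℝ, and let φ, ψ be finite nonnegative Borel measures on J × J with φ ≤ ψ. There exists a circulation α with φ ≤ α ≤ ψ and ∫ v dα = c if and only if for every integer-valued potential F (i.e. F(x,y) = f(x) − f(y) where f : J → ℤ is bounded and Borel measurable) the following hold: ∫ (F + v)₊ dψ ≥ ∫ (F + v)₋ dφ + c, ∫ (F − v)₊ dψ ≥ ∫ (F − v)₋ dφ − c, and ∫ F₊ dψ ≥ ∫ F₋ dφ, where g₊ and g₋ denote the positive and negative parts of the function g. -/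
open MeasureTheory Set

/-- Integral of a function against a finite signed measure, via the Jordan decomposition. -/
noncomputable def signedIntegral {X : Type*} [MeasurableSpace X]
    (α : SignedMeasure X) (f : X → ℝ) : ℝ :=
  (∫ x, f x ∂α.toJordanDecomposition.posPart) - ∫ x, f x ∂α.toJordanDecomposition.negPart

/-!
A circulation `m` with `φ ≤ m ≤ ψ` and `∫ v ∂m = c` is a linear functional on simple functions with
values prescribed on potentials and on `v`, dominated by the support function
`g ↦ ∫ g⁺ ∂ψ - ∫ g⁻ ∂φ` of the order interval `[φ, ψ]`; by Hahn–Banach it exists if and only if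
`l * c ≤ ∫ (F + l • v)⁺ ∂ψ - ∫ (F + l • v)⁻ ∂φ` for all real potentials `F` and all real `l`. By
homogeneity it suffices to take `l ∈ {1, -1, 0}`. For integral `v`, a real `f` is replaced by the
random rounding `⌊f + t⌋` with `t` uniform in `[0, 1]`: `⌊a + t⌋ - ⌊b + t⌋ + n`
is nonnegative for all `t` if `a - b + n` is, and likewise nonpositive, so its positive and negative
parts average to those of `a - b + n`, and the real inequality is an average of integral ones.
-/

local notation:25 X:26 " →ₛ " Y:25 => SimpleFunc X Y

theorem exists_linearMap_comp_eq_of_le_sublinear {V E : Type*} [AddCommGroup V] [Module ℝ V]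
    [AddCommGroup E] [Module ℝ E] (T : V →ₗ[ℝ] E) (r : V →ₗ[ℝ] ℝ) {N : E → ℝ}
    (N_hom : ∀ d : ℝ, 0 < d → ∀ x, N (d • x) = d * N x) (N_add : ∀ x y, N (x + y) ≤ N x + N y)
    (hr : ∀ u, r u ≤ N (T u)) :
    ∃ ℓ : E →ₗ[ℝ] ℝ, ℓ ∘ₗ T = r ∧ ∀ x, ℓ x ≤ N x := by
  have N_zero : N 0 = 0 := by
    have := N_hom 2 two_pos 0
    rw [smul_zero] at this
    linarith
  have hker : r ∈ T.ker.dualAnnihilator := by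
    rw [Submodule.mem_dualAnnihilator]
    intro u hu
    rw [LinearMap.mem_ker] at hu
    have h_pos := hr u
    have h_neg := hr (-u)
    rw [map_neg, map_neg, hu, neg_zero, N_zero] at h_neg
    rw [hu, N_zero] at h_pos
    linarith
  rw [← LinearMap.range_dualMap_eq_dualAnnihilator_ker] at hker
  obtain ⟨g, rfl⟩ := hker
  obtain ⟨ℓ, hℓg, hℓN⟩ := exists_extension_of_le_sublinear ⟨T.range, g.domRestrict T.range⟩
    N N_hom N_add (by rintro ⟨_, u, rfl⟩; exact hr u)
  exact ⟨ℓ, LinearMap.ext fun u => hℓg ⟨T u, u, rfl⟩, hℓN⟩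

section OrderInterval

variable {X : Type*} [MeasurableSpace X]

/-- The support function of the order interval `[φ, ψ]` of measures: the best upper bound for
`∫ g ∂m` over all `m` with `φ ≤ m ≤ ψ`. -/
noncomputable def orderIntervalSupport (φ ψ : Measure X) (g : X → ℝ) : ℝ :=
  ∫ x, (g x)⁺ ∂ψ - ∫ x, (g x)⁻ ∂φ

variable {φ m ψ : Measure X} {g h : X → ℝ}

theorem le_orderIntervalSupport_iff {b : ℝ} :
    b ≤ orderIntervalSupport φ ψ g ↔ ∫ x, max (g x) 0 ∂ψ ≥ ∫ x, max (-g x) 0 ∂φ + b :=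
  le_sub_iff_add_le'

theorem integral_le_orderIntervalSupport (hφm : φ ≤ m) (hmψ : m ≤ ψ) (hg : Integrable g ψ) :
    ∫ x, g x ∂m ≤ orderIntervalSupport φ ψ g := by
  have hgm := hg.mono_measure hmψ
  have h_pos : ∫ x, (g x)⁺ ∂m ≤ ∫ x, (g x)⁺ ∂ψ :=
    integral_mono_measure hmψ (ae_of_all _ fun _ => posPart_nonneg _) hg.pos_part
  have h_neg : ∫ x, (g x)⁻ ∂φ ≤ ∫ x, (g x)⁻ ∂m :=
    integral_mono_measure hφm (ae_of_all _ fun _ => negPart_nonneg _) hgm.neg_part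
  calc ∫ x, g x ∂m = ∫ x, ((g x)⁺ - (g x)⁻) ∂m := by
        simp only [posPart_sub_negPart]
    _ = ∫ x, (g x)⁺ ∂m - ∫ x, (g x)⁻ ∂m := integral_sub hgm.pos_part hgm.neg_part
    _ ≤ orderIntervalSupport φ ψ g := sub_le_sub h_pos h_neg

theorem orderIntervalSupport_smul {d : ℝ} (hd : 0 ≤ d) (g : X → ℝ) :
    orderIntervalSupport φ ψ (d • g) = d * orderIntervalSupport φ ψ g := by
  have h_pos (x) : ((d • g) x)⁺ = d * (g x)⁺ := by
    simp [posPart_def, mul_max_of_nonneg _ _ hd]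
  have h_neg (x) : ((d • g) x)⁻ = d * (g x)⁻ := by
    simp [negPart_def, mul_max_of_nonneg _ _ hd]
  simp only [orderIntervalSupport, h_pos, h_neg, integral_const_mul, mul_sub]

theorem orderIntervalSupport_add_le (hφψ : φ ≤ ψ) (hg : Integrable g ψ) (hh : Integrable h ψ) :
    orderIntervalSupport φ ψ (g + h) ≤ orderIntervalSupport φ ψ g + orderIntervalSupport φ ψ h := by
  have posPart_defect_eq (x) : (g x)⁺ + (h x)⁺ - ((g + h) x)⁺ = (g x)⁻ + (h x)⁻ - ((g + h) x)⁻ := by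
    have := posPart_sub_negPart (g x)
    have := posPart_sub_negPart (h x)
    have := posPart_sub_negPart ((g + h) x)
    rw [Pi.add_apply] at *
    linarith
  have posPart_defect_nonneg (x) : 0 ≤ (g x)⁺ + (h x)⁺ - ((g + h) x)⁺ := by
    rw [sub_nonneg, Pi.add_apply, posPart_def (g x + h x)]
    exact sup_le (add_le_add (le_posPart _) (le_posPart _))
      (add_nonneg (posPart_nonneg _) (posPart_nonneg _))
  have defect_le : ∫ x, ((g x)⁺ + (h x)⁺ - ((g + h) x)⁺) ∂φ
      ≤ ∫ x, ((g x)⁺ + (h x)⁺ - ((g + h) x)⁺) ∂ψ :=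
    integral_mono_measure hφψ (ae_of_all _ posPart_defect_nonneg)
      ((hg.pos_part.add hh.pos_part).sub (hg.add hh).pos_part)
  have hg' := hg.mono_measure hφψ
  have hh' := hh.mono_measure hφψ
  have defect_ψ : ∫ x, ((g x)⁺ + (h x)⁺ - ((g + h) x)⁺) ∂ψ
      = ∫ x, (g x)⁺ ∂ψ + ∫ x, (h x)⁺ ∂ψ - ∫ x, ((g + h) x)⁺ ∂ψ :=
    (integral_sub (hg.pos_part.add hh.pos_part) (hg.add hh).pos_part).trans
      (congrArg (· - _) (integral_add hg.pos_part hh.pos_part))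
  have defect_φ : ∫ x, ((g x)⁻ + (h x)⁻ - ((g + h) x)⁻) ∂φ
      = ∫ x, (g x)⁻ ∂φ + ∫ x, (h x)⁻ ∂φ - ∫ x, ((g + h) x)⁻ ∂φ :=
    (integral_sub (hg'.neg_part.add hh'.neg_part) (hg'.add hh').neg_part).trans
      (congrArg (· - _) (integral_add hg'.neg_part hh'.neg_part))
  rw [defect_ψ, integral_congr_ae (ae_of_all φ posPart_defect_eq), defect_φ] at defect_le
  simp only [orderIntervalSupport]
  linarith

theorem orderIntervalSupport_indicator_one {s : Set X} (hs : MeasurableSet s) :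
    orderIntervalSupport φ ψ (s.indicator 1) = ψ.real s := by
  have h_nonneg (x) : 0 ≤ s.indicator (1 : X → ℝ) x := indicator_nonneg (fun _ _ => zero_le_one) x
  simp only [orderIntervalSupport, posPart_of_nonneg (h_nonneg _), negPart_of_nonneg (h_nonneg _),
    integral_zero, sub_zero, integral_indicator_one hs]

theorem orderIntervalSupport_neg_indicator_one {s : Set X} (hs : MeasurableSet s) :
    orderIntervalSupport φ ψ (-s.indicator 1) = -φ.real s := by
  have h_nonneg (x) : 0 ≤ s.indicator (1 : X → ℝ) x := indicator_nonneg (fun _ _ => zero_le_one) x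
  simp only [orderIntervalSupport, Pi.neg_apply, posPart_neg, negPart_neg,
    posPart_of_nonneg (h_nonneg _), negPart_of_nonneg (h_nonneg _), integral_zero, zero_sub,
    integral_indicator_one hs]

theorem exists_toSignedMeasure_eq_of_nonneg {α : SignedMeasure X} (hα : 0 ≤ α) :
    ∃ (m : Measure X) (_ : IsFiniteMeasure m), m.toSignedMeasure = α := by
  have hα' := (VectorMeasure.le_restrict_univ_iff_le 0 α).2 hα
  exact ⟨α.toMeasureOfZeroLE univ .univ hα', inferInstance,
    by rw [α.toMeasureOfZeroLE_toSignedMeasure hα']⟩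

theorem exists_measure_le_real_eq_of_additive [IsFiniteMeasure ψ] (a : Set X → ℝ)
    (a_nonneg : ∀ s, MeasurableSet s → 0 ≤ a s) (a_le : ∀ s, MeasurableSet s → a s ≤ ψ.real s)
    (a_union : ∀ s t, MeasurableSet s → MeasurableSet t → Disjoint s t → a (s ∪ t) = a s + a t) :
    ∃ m ≤ ψ, ∀ s, MeasurableSet s → m.real s = a s := by
  classical
  let α : SignedMeasure X := VectorMeasure.of_additive_of_le_measure (μ := ψ)
    (fun s => if MeasurableSet s then a s else 0)
    (fun s => by
      split_ifs with hs
      · rw [Real.enorm_of_nonneg (a_nonneg s hs)]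
        exact ENNReal.ofReal_le_of_le_toReal (a_le s hs)
      · simp)
    (fun s t hs ht hst => by simp only [hs, ht, hs.union ht, if_true, a_union s t hs ht hst])
    (fun s hs => if_neg hs)
  have α_apply (s) (hs : MeasurableSet s) : α s = a s := if_pos hs
  obtain ⟨m, _, hmα⟩ := exists_toSignedMeasure_eq_of_nonneg (α := α)
    fun s hs => (α_apply s hs).symm ▸ a_nonneg s hs
  have m_real (s) (hs : MeasurableSet s) : m.real s = a s := by
    rw [← Measure.toSignedMeasure_apply_measurable hs, hmα, α_apply s hs]
  refine ⟨m, Measure.le_iff.2 fun s hs => ?_, m_real⟩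
  rw [← ENNReal.toReal_le_toReal (measure_ne_top m s) (measure_ne_top ψ s)]
  exact (m_real s hs).trans_le (a_le s hs)

theorem restrict_union_of_disjoint {β : Type*} [AddZeroClass β] {s t : Set X}
    (hs : MeasurableSet s) (ht : MeasurableSet t) (hst : Disjoint s t) (f : X →ₛ β) :
    f.restrict (s ∪ t) = f.restrict s + f.restrict t := by
  apply SimpleFunc.coe_injective
  simp only [SimpleFunc.coe_add, SimpleFunc.coe_restrict _ hs, SimpleFunc.coe_restrict _ ht,
    SimpleFunc.coe_restrict _ (hs.union ht), indicator_union_of_disjoint hst]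
  rfl

theorem exists_measure_le_integral_eq_linearMap [IsFiniteMeasure ψ] (ℓ : (X →ₛ ℝ) →ₗ[ℝ] ℝ)
    (ℓ_nonneg : ∀ s, MeasurableSet s → 0 ≤ ℓ ((1 : X →ₛ ℝ).restrict s))
    (ℓ_le : ∀ s, MeasurableSet s → ℓ ((1 : X →ₛ ℝ).restrict s) ≤ ψ.real s) :
    ∃ m ≤ ψ, ∀ g : X →ₛ ℝ, ∫ x, g x ∂m = ℓ g := by
  obtain ⟨m, hmψ, m_real⟩ := exists_measure_le_real_eq_of_additive _ ℓ_nonneg ℓ_le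
    fun s t hs ht hst => by rw [restrict_union_of_disjoint hs ht hst, map_add]
  have := isFiniteMeasure_of_le ψ hmψ
  refine ⟨m, hmψ, fun g => ?_⟩
  induction g using SimpleFunc.induction with
  | @const b s hs =>
    have piecewise_eq : SimpleFunc.piecewise s hs (SimpleFunc.const X b) (SimpleFunc.const X 0)
        = b • (1 : X →ₛ ℝ).restrict s := by
      ext x
      by_cases hx : x ∈ s <;> simp [hs, hx]
    rw [piecewise_eq, map_smul, ← m_real s hs, SimpleFunc.coe_smul, SimpleFunc.coe_restrict _ hs]
    exact (integral_smul b _).trans (congrArg (b • ·) (integral_indicator_one hs))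
  | add _ hf hg =>
    rw [map_add, ← hf, ← hg]
    exact integral_add (SimpleFunc.integrable_of_isFiniteMeasure _)
      (SimpleFunc.integrable_of_isFiniteMeasure _)

theorem exists_measure_mem_Icc_integral_eq_iff {V : Type*} [AddCommGroup V] [Module ℝ V]
    [IsFiniteMeasure ψ] (hφψ : φ ≤ ψ) (T : V →ₗ[ℝ] X →ₛ ℝ) (r : V →ₗ[ℝ] ℝ) :
    (∃ m ∈ Icc φ ψ, ∀ u, ∫ x, T u x ∂m = r u) ↔ ∀ u, r u ≤ orderIntervalSupport φ ψ (T u) := by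
  have := isFiniteMeasure_of_le ψ hφψ
  refine ⟨fun ⟨m, ⟨hφm, hmψ⟩, hm⟩ u => hm u ▸ integral_le_orderIntervalSupport hφm hmψ
    (T u).integrable_of_isFiniteMeasure, fun hr => ?_⟩
  obtain ⟨ℓ, hℓT, hℓ⟩ := exists_linearMap_comp_eq_of_le_sublinear T r
    (N := fun g : X →ₛ ℝ => orderIntervalSupport φ ψ g)
    (fun d hd g => orderIntervalSupport_smul hd.le g)
    (fun g h => orderIntervalSupport_add_le hφψ g.integrable_of_isFiniteMeasure
      h.integrable_of_isFiniteMeasure) hr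
  have ℓ_le (s) (hs : MeasurableSet s) : ℓ ((1 : X →ₛ ℝ).restrict s) ≤ ψ.real s := by
    have := hℓ ((1 : X →ₛ ℝ).restrict s)
    rwa [SimpleFunc.coe_restrict _ hs, SimpleFunc.coe_one,
      orderIntervalSupport_indicator_one hs] at this
  have le_ℓ (s) (hs : MeasurableSet s) : φ.real s ≤ ℓ ((1 : X →ₛ ℝ).restrict s) := by
    have := hℓ (-(1 : X →ₛ ℝ).restrict s)
    rwa [SimpleFunc.coe_neg, SimpleFunc.coe_restrict _ hs, SimpleFunc.coe_one,
      orderIntervalSupport_neg_indicator_one hs, map_neg, neg_le_neg_iff] at this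
  obtain ⟨m, hmψ, hmℓ⟩ := exists_measure_le_integral_eq_linearMap ℓ
    (fun s hs => measureReal_nonneg.trans (le_ℓ s hs)) ℓ_le
  have := isFiniteMeasure_of_le ψ hmψ
  refine ⟨m, ⟨Measure.le_iff.2 fun s hs => ?_, hmψ⟩, fun u => ?_⟩
  · have m_real : m.real s = ℓ ((1 : X →ₛ ℝ).restrict s) := by
      rw [← hmℓ, SimpleFunc.coe_restrict _ hs, SimpleFunc.coe_one, integral_indicator_one hs]
    rw [← ENNReal.toReal_le_toReal (measure_ne_top φ s) (measure_ne_top m s)]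
    exact (le_ℓ s hs).trans_eq m_real.symm
  · rw [hmℓ, ← hℓT, LinearMap.comp_apply]

end OrderInterval

section Circulation

variable {J : Type*} [MeasurableSpace J]

/-- The potential `(x, y) ↦ f x - f y` of a simple function `f`, as a linear operator. -/
def potential : (J →ₛ ℝ) →ₗ[ℝ] (J × J →ₛ ℝ) where
  toFun f := f.comp Prod.fst measurable_fst - f.comp Prod.snd measurable_snd
  map_add' f g := by ext; simp [add_sub_add_comm]
  map_smul' d f := by ext; simp [mul_sub]

theorem potential_apply (f : J →ₛ ℝ) (p : J × J) : potential f p = f p.1 - f p.2 := rfl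

variable {m φ ψ : Measure (J × J)}

theorem integral_potential [IsFiniteMeasure m] (f : J →ₛ ℝ) :
    ∫ p, potential f p ∂m = ∫ x, f x ∂m.fst - ∫ x, f x ∂m.snd := by
  rw [Measure.fst, Measure.snd,
    integral_map measurable_fst.aemeasurable f.stronglyMeasurable.aestronglyMeasurable,
    integral_map measurable_snd.aemeasurable f.stronglyMeasurable.aestronglyMeasurable]
  exact integral_sub (f.comp _ measurable_fst).integrable_of_isFiniteMeasure
    (f.comp _ measurable_snd).integrable_of_isFiniteMeasure

theorem forall_integral_potential_eq_zero_iff [IsFiniteMeasure m] :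
    (∀ f : J →ₛ ℝ, ∫ p, potential f p ∂m = 0) ↔ m.fst = m.snd := by
  refine ⟨fun h => Measure.ext fun A hA => ?_, fun h f => by rw [integral_potential, h, sub_self]⟩
  have h_indicator := h ((1 : J →ₛ ℝ).restrict A)
  rw [integral_potential, SimpleFunc.coe_restrict _ hA, SimpleFunc.coe_one,
    integral_indicator_one hA, integral_indicator_one hA, sub_eq_zero] at h_indicator
  exact (measureReal_eq_measureReal_iff).1 h_indicator

theorem exists_circulation_integral_eq_iff [IsFiniteMeasure ψ] (hφψ : φ ≤ ψ) (v : J × J →ₛ ℝ)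
    (c : ℝ) :
    (∃ m ∈ Icc φ ψ, m.fst = m.snd ∧ ∫ p, v p ∂m = c) ↔
      ∀ (f : J →ₛ ℝ) (l : ℝ), l * c ≤ orderIntervalSupport φ ψ (potential f + l • v) := by
  let T := potential.coprod (LinearMap.toSpanSingleton ℝ (J × J →ₛ ℝ) v)
  let r := c • LinearMap.snd ℝ (J →ₛ ℝ) ℝ
  have integral_T (m) [IsFiniteMeasure m] (u) :
      ∫ p, T u p ∂m = ∫ p, potential u.1 p ∂m + u.2 * ∫ p, v p ∂m :=
    (integral_add (potential u.1).integrable_of_isFiniteMeasure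
      (u.2 • v).integrable_of_isFiniteMeasure).trans (congrArg _ (integral_const_mul _ _))
  have circulation_iff (m) [IsFiniteMeasure m] :
      (m.fst = m.snd ∧ ∫ p, v p ∂m = c) ↔ ∀ u, ∫ p, T u p ∂m = r u := by
    simp only [integral_T, ← forall_integral_potential_eq_zero_iff, r, LinearMap.smul_apply,
      LinearMap.snd_apply, smul_eq_mul, mul_comm c]
    exact ⟨fun ⟨h, hv⟩ u => by rw [h, hv, zero_add],
      fun h => ⟨fun f => by simpa using h (f, 0), by simpa using h (0, 1)⟩⟩
  calc (∃ m ∈ Icc φ ψ, m.fst = m.snd ∧ ∫ p, v p ∂m = c)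
      ↔ ∃ m ∈ Icc φ ψ, ∀ u, ∫ p, T u p ∂m = r u :=
        exists_congr fun m => and_congr_right fun hm =>
          have := isFiniteMeasure_of_le ψ hm.2
          circulation_iff m
    _ ↔ ∀ u, r u ≤ orderIntervalSupport φ ψ (T u) := exists_measure_mem_Icc_integral_eq_iff hφψ T r
    _ ↔ _ := by simp [T, r, Prod.forall, mul_comm c]

end Circulation

section Rounding

theorem intervalIntegrable_floor_add (a x y : ℝ) :
    IntervalIntegrable (fun t : ℝ => (⌊a + t⌋ : ℝ)) volume x y :=
  Monotone.intervalIntegrable fun _ _ hst =>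
    Int.cast_le.2 (Int.floor_le_floor (add_le_add_right hst a))

theorem integral_floor_add_sub_floor_add (a b : ℝ) :
    ∫ t in (0 : ℝ)..1, ((⌊a + t⌋ : ℝ) - ⌊b + t⌋) = a - b := by
  have intervalIntegrable_fract (a : ℝ) :
      IntervalIntegrable (fun t => Int.fract (a + t)) volume 0 1 :=
    (Continuous.intervalIntegrable (by fun_prop) 0 1).sub (intervalIntegrable_floor_add a 0 1)
  have integral_fract (a : ℝ) :
      ∫ t in (0 : ℝ)..1, Int.fract (a + t) = ∫ t in (0 : ℝ)..1, Int.fract t := by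
    have h_periodic : Function.Periodic (Int.fract : ℝ → ℝ) 1 := Int.fract_add_one
    rw [intervalIntegral.integral_comp_add_left, add_zero, h_periodic.intervalIntegral_add_eq a 0,
      zero_add]
  have floor_sub_eq (t : ℝ) :
      (⌊a + t⌋ : ℝ) - ⌊b + t⌋ = (a - b) - (Int.fract (a + t) - Int.fract (b + t)) := by
    rw [← Int.self_sub_fract, ← Int.self_sub_fract]
    ring
  simp_rw [floor_sub_eq]
  rw [intervalIntegral.integral_sub intervalIntegrable_const
      ((intervalIntegrable_fract a).sub (intervalIntegrable_fract b)),
    intervalIntegral.integral_sub (intervalIntegrable_fract a) (intervalIntegrable_fract b),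
    integral_fract a, integral_fract b]
  simp

theorem intervalIntegrable_floor_add_sub_floor_add_add (a b c x y : ℝ) :
    IntervalIntegrable (fun t : ℝ => (⌊a + t⌋ : ℝ) - ⌊b + t⌋ + c) volume x y :=
  ((intervalIntegrable_floor_add a x y).sub (intervalIntegrable_floor_add b x y)).add
    intervalIntegrable_const

theorem floor_add_sub_floor_add_add_nonneg {a b : ℝ} {n : ℤ} (h : 0 ≤ a - b + n) (t : ℝ) :
    (0 : ℝ) ≤ ⌊a + t⌋ - ⌊b + t⌋ + n := by
  have : ⌊b + t⌋ ≤ ⌊a + t + n⌋ := Int.floor_le_floor (by linarith)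
  rw [Int.floor_add_intCast] at this
  exact_mod_cast (by lia : 0 ≤ ⌊a + t⌋ - ⌊b + t⌋ + n)

theorem integral_posPart_floor_add_sub_floor_add_add (a b : ℝ) (n : ℤ) :
    ∫ t in (0 : ℝ)..1, ((⌊a + t⌋ : ℝ) - ⌊b + t⌋ + n)⁺ = (a - b + n)⁺ := by
  rcases le_total 0 (a - b + n) with h | h
  · simp_rw [posPart_of_nonneg h, posPart_of_nonneg (floor_add_sub_floor_add_add_nonneg h _)]
    rw [intervalIntegral.integral_add ((intervalIntegrable_floor_add a 0 1).sub
      (intervalIntegrable_floor_add b 0 1)) intervalIntegrable_const,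
      integral_floor_add_sub_floor_add]
    simp
  · have h_nonpos (t : ℝ) : (⌊a + t⌋ : ℝ) - ⌊b + t⌋ + n ≤ 0 := by
      have := floor_add_sub_floor_add_add_nonneg (a := b) (b := a) (n := -n)
        (by push_cast; linarith) t
      push_cast at this
      linarith
    simp_rw [posPart_of_nonpos h, posPart_of_nonpos (h_nonpos _), intervalIntegral.integral_zero]

theorem integral_negPart_floor_add_sub_floor_add_add (a b : ℝ) (n : ℤ) :
    ∫ t in (0 : ℝ)..1, ((⌊a + t⌋ : ℝ) - ⌊b + t⌋ + n)⁻ = (a - b + n)⁻ := by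
  have neg_eq (x y z : ℝ) : -(x - y + z) = y - x + -z := by ring
  simp_rw [← posPart_neg, neg_eq, ← Int.cast_neg, integral_posPart_floor_add_sub_floor_add_add]

end Rounding

section SimpleFunc

variable {X β : Type*} [MeasurableSpace X] {μ φ ψ : Measure X} [IsFiniteMeasure μ]
  [IsFiniteMeasure φ] [IsFiniteMeasure ψ] {a b : ℝ}

theorem integral_comp_simpleFunc (G : β → ℝ) (s : X →ₛ β) :
    ∫ x, G (s x) ∂μ = ∑ y ∈ s.range, μ.real (s ⁻¹' {y}) * G y := by
  have comp_eq (x) : G (s x) = ∑ y ∈ s.range, (s ⁻¹' {y}).indicator (fun _ => G y) x := by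
    rw [Finset.sum_eq_single_of_mem (s x) (s.mem_range_self x) fun y _ hy =>
      indicator_of_notMem (fun h => hy h.symm) _]
    exact (indicator_of_mem rfl _).symm
  simp_rw [comp_eq]
  rw [integral_finsetSum _ fun y _ => (integrable_const _).indicator (s.measurableSet_fiber y)]
  simp_rw [integral_indicator_const _ (s.measurableSet_fiber _), smul_eq_mul]

theorem intervalIntegrable_integral_comp_simpleFunc {H : ℝ → β → ℝ}
    (hH : ∀ y, IntervalIntegrable (H · y) volume a b) (s : X →ₛ β) :
    IntervalIntegrable (fun t => ∫ x, H t (s x) ∂μ) volume a b := by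
  simp_rw [integral_comp_simpleFunc, ← Finset.sum_fn]
  exact IntervalIntegrable.sum _ fun y _ => (hH y).const_mul _

theorem intervalIntegral_integral_comp_simpleFunc {H : ℝ → β → ℝ}
    (hH : ∀ y, IntervalIntegrable (H · y) volume a b) (s : X →ₛ β) :
    ∫ t in a..b, (∫ x, H t (s x) ∂μ) = ∫ x, (∫ t in a..b, H t (s x)) ∂μ := by
  rw [integral_comp_simpleFunc fun y => ∫ t in a..b, H t y]
  simp_rw [integral_comp_simpleFunc]
  rw [intervalIntegral.integral_finsetSum fun y _ => (hH y).const_mul _]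
  simp_rw [intervalIntegral.integral_const_mul]

theorem intervalIntegrable_orderIntervalSupport_comp_simpleFunc {H : ℝ → β → ℝ}
    (hH : ∀ y, IntervalIntegrable (H · y) volume a b) (s : X →ₛ β) :
    IntervalIntegrable (fun t => orderIntervalSupport φ ψ fun x => H t (s x)) volume a b :=
  (intervalIntegrable_integral_comp_simpleFunc (fun y => ⟨(hH y).1.pos_part, (hH y).2.pos_part⟩)
    s).sub <| intervalIntegrable_integral_comp_simpleFunc
      (fun y => ⟨(hH y).1.neg_part, (hH y).2.neg_part⟩) s

theorem integral_orderIntervalSupport_comp_simpleFunc {H : ℝ → β → ℝ}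
    (hH : ∀ y, IntervalIntegrable (H · y) volume a b) (s : X →ₛ β) :
    ∫ t in a..b, orderIntervalSupport φ ψ (fun x => H t (s x))
      = ∫ x, (∫ t in a..b, (H t (s x))⁺) ∂ψ - ∫ x, (∫ t in a..b, (H t (s x))⁻) ∂φ := by
  have posPart_integrable (y) : IntervalIntegrable (fun t => (H t y)⁺) volume a b :=
    ⟨(hH y).1.pos_part, (hH y).2.pos_part⟩
  have negPart_integrable (y) : IntervalIntegrable (fun t => (H t y)⁻) volume a b :=
    ⟨(hH y).1.neg_part, (hH y).2.neg_part⟩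
  rw [← intervalIntegral_integral_comp_simpleFunc posPart_integrable,
    ← intervalIntegral_integral_comp_simpleFunc negPart_integrable]
  exact intervalIntegral.integral_sub
    (intervalIntegrable_integral_comp_simpleFunc posPart_integrable s)
    (intervalIntegrable_integral_comp_simpleFunc negPart_integrable s)

end SimpleFunc

section Integrality

variable {J : Type*} [MeasurableSpace J] {φ ψ : Measure (J × J)} [IsFiniteMeasure φ]
  [IsFiniteMeasure ψ]

theorem le_orderIntervalSupport_potential_of_forall_int {c : ℝ} {n : J × J →ₛ ℤ}
    (h : ∀ g : J →ₛ ℤ, c ≤ orderIntervalSupport φ ψ fun p => (g p.1 : ℝ) - g p.2 + n p)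
    (f : J →ₛ ℝ) : c ≤ orderIntervalSupport φ ψ fun p => f p.1 - f p.2 + n p := by
  let s : J × J →ₛ (ℝ × ℝ) × ℤ :=
    ((f.comp Prod.fst measurable_fst).pair (f.comp Prod.snd measurable_snd)).pair n
  let H (t : ℝ) (y : (ℝ × ℝ) × ℤ) : ℝ := ⌊y.1.1 + t⌋ - ⌊y.1.2 + t⌋ + y.2
  have hH (y) : IntervalIntegrable (H · y) volume 0 1 :=
    intervalIntegrable_floor_add_sub_floor_add_add y.1.1 y.1.2 y.2 0 1
  calc c = ∫ _ in (0 : ℝ)..1, c := by simp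
    _ ≤ ∫ t in (0 : ℝ)..1, orderIntervalSupport φ ψ fun p => H t (s p) :=
        intervalIntegral.integral_mono zero_le_one intervalIntegrable_const
          (intervalIntegrable_orderIntervalSupport_comp_simpleFunc hH s)
          fun t => h (f.map fun x => ⌊x + t⌋)
    _ = ∫ p, (∫ t in (0 : ℝ)..1, (H t (s p))⁺) ∂ψ - ∫ p, (∫ t in (0 : ℝ)..1, (H t (s p))⁻) ∂φ :=
        integral_orderIntervalSupport_comp_simpleFunc hH s
    _ = orderIntervalSupport φ ψ fun p => f p.1 - f p.2 + n p := by
        simp only [H, integral_posPart_floor_add_sub_floor_add_add,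
          integral_negPart_floor_add_sub_floor_add_add]
        rfl

theorem forall_real_le_orderIntervalSupport_iff_forall_int (n : J × J →ₛ ℤ) (c : ℝ) :
    (∀ (f : J →ₛ ℝ) (l : ℝ),
        l * c ≤ orderIntervalSupport φ ψ (potential f + l • n.map (Int.cast : ℤ → ℝ))) ↔
      ∀ (f : J →ₛ ℤ), ∀ k ∈ ({1, -1, 0} : Set ℤ),
        k * c ≤ orderIntervalSupport φ ψ fun p => (f p.1 : ℝ) - f p.2 + k * n p := by
  refine ⟨fun h f k _ => h (f.map Int.cast) k, fun h f l => ?_⟩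
  obtain ⟨d, k, hd, hk, rfl⟩ : ∃ (d : ℝ) (k : ℤ), 0 < d ∧ k ∈ ({1, -1, 0} : Set ℤ) ∧ l = d * k := by
    rcases lt_trichotomy l 0 with hl | rfl | hl
    · exact ⟨-l, -1, by simpa, by simp, by simp⟩
    · exact ⟨1, 0, by simp, by simp, by simp⟩
    · exact ⟨l, 1, hl, by simp, by simp⟩
  have h_unit := le_orderIntervalSupport_potential_of_forall_int (c := k * c) (n := k • n)
    (fun g => by simpa using h g k hk) (d⁻¹ • f)
  have scale_eq : ⇑(potential f + (d * k) • n.map (Int.cast : ℤ → ℝ))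
      = d • fun p => (d⁻¹ • f) p.1 - (d⁻¹ • f) p.2 + ((k • n) p : ℤ) := by
    ext p
    simp only [SimpleFunc.coe_add, SimpleFunc.coe_smul, SimpleFunc.coe_map, SimpleFunc.coe_mul,
      SimpleFunc.coe_intCast, SimpleFunc.smul_apply, Pi.add_apply, Pi.smul_apply, Pi.mul_apply,
      Function.comp_apply, potential_apply, smul_eq_mul, zsmul_eq_mul, Int.cast_mul, Int.cast_eq]
    field_simp
  calc d * k * c = d * (k * c) := mul_assoc _ _ _
    _ ≤ d * orderIntervalSupport φ ψ _ := mul_le_mul_of_nonneg_left h_unit hd.le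
    _ = _ := by rw [← orderIntervalSupport_smul hd.le, ← scale_eq]; rfl

theorem exists_simpleFunc_coe_eq_of_abs_le {X : Type*} [MeasurableSpace X] {f : X → ℤ}
    (hf : Measurable f) {C : ℤ} (hC : ∀ x, |f x| ≤ C) : ∃ g : X →ₛ ℤ, ⇑g = f :=
  ⟨⟨f, fun y => hf (measurableSet_singleton y),
    (finite_Icc (-C) C).subset (range_subset_iff.2 fun x => abs_le.1 (hC x))⟩, rfl⟩

theorem forall_simpleFunc_int_iff {X : Type*} [MeasurableSpace X] {P : (X → ℤ) → Prop} :
    (∀ g : X →ₛ ℤ, P g) ↔ ∀ f : X → ℤ, Measurable f → (∃ C : ℤ, ∀ x, |f x| ≤ C) → P f := by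
  constructor
  · rintro h f hf ⟨C, hC⟩
    obtain ⟨g, rfl⟩ := exists_simpleFunc_coe_eq_of_abs_le hf hC
    exact h g
  · intro h g
    obtain ⟨C, hC⟩ := (g.map fun k => |k|).finite_range.bddAbove
    exact h g g.measurable ⟨C, fun x => hC (mem_range_self x)⟩

theorem exists_simpleFunc_intCast_eq {X : Type*} [MeasurableSpace X] {v : X → ℝ}
    (hv_meas : Measurable v) (hv_bdd : ∃ C, ∀ x, |v x| ≤ C) (hv_int : ∀ x, ∃ n : ℤ, v x = n) :
    ∃ n : X →ₛ ℤ, v = fun x => (n x : ℝ) := by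
  obtain ⟨C, hC⟩ := hv_bdd
  have floor_v (x) : (⌊v x⌋ : ℝ) = v x := by
    obtain ⟨k, hk⟩ := hv_int x
    rw [hk, Int.floor_intCast]
  have abs_floor_le (x) : |⌊v x⌋| ≤ ⌈C⌉ := by
    rw [← Int.cast_le (R := ℝ), Int.cast_abs, floor_v]
    exact (hC x).trans (Int.le_ceil C)
  obtain ⟨n, hn⟩ := exists_simpleFunc_coe_eq_of_abs_le hv_meas.floor abs_floor_le
  exact ⟨n, funext fun x => by rw [hn, floor_v]⟩

theorem signedIntegral_toSignedMeasure {X : Type*} [MeasurableSpace X] (m : Measure X)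
    [IsFiniteMeasure m] (f : X → ℝ) : signedIntegral m.toSignedMeasure f = ∫ x, f x ∂m := by
  let j : JordanDecomposition X := ⟨m, 0, Measure.MutuallySingular.zero_right⟩
  have : m.toSignedMeasure.toJordanDecomposition = j :=
    SignedMeasure.toJordanDecomposition_eq (by simp [JordanDecomposition.toSignedMeasure, j])
  simp [signedIntegral, this, j]

theorem fst_eq_snd_iff_toSignedMeasure_prod_univ_eq (m : Measure (J × J)) [IsFiniteMeasure m] :
    m.fst = m.snd ↔ ∀ A : Set J, MeasurableSet A →
      m.toSignedMeasure (A ×ˢ (univ : Set J)) = m.toSignedMeasure ((univ : Set J) ×ˢ A) := by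
  rw [Measure.ext_iff]
  refine forall₂_congr fun A hA => ?_
  rw [Measure.toSignedMeasure_apply_measurable (hA.prod .univ),
    Measure.toSignedMeasure_apply_measurable (MeasurableSet.univ.prod hA),
    measureReal_eq_measureReal_iff, Measure.fst_apply hA, Measure.snd_apply hA, prod_univ,
    univ_prod]

theorem exists_signedMeasure_circulation_iff (v : J × J → ℝ) (c : ℝ) :
    (∃ α : SignedMeasure (J × J),
        (∀ A : Set J, MeasurableSet A → α (A ×ˢ (univ : Set J)) = α ((univ : Set J) ×ˢ A)) ∧
        φ.toSignedMeasure ≤ α ∧ α ≤ ψ.toSignedMeasure ∧ signedIntegral α v = c) ↔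
      ∃ m ∈ Icc φ ψ, m.fst = m.snd ∧ ∫ p, v p ∂m = c := by
  constructor
  · rintro ⟨α, hα, hφα, hαψ, hαc⟩
    obtain ⟨m, _, rfl⟩ := exists_toSignedMeasure_eq_of_nonneg
      ((Measure.zero_le_toSignedMeasure φ).trans hφα)
    exact ⟨m, ⟨(Measure.toSignedMeasure_le_toSignedMeasure_iff _ _).1 hφα,
      (Measure.toSignedMeasure_le_toSignedMeasure_iff _ _).1 hαψ⟩,
      (fst_eq_snd_iff_toSignedMeasure_prod_univ_eq m).2 hα,
      signedIntegral_toSignedMeasure m v ▸ hαc⟩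
  · rintro ⟨m, ⟨hφm, hmψ⟩, hm, hmc⟩
    have := isFiniteMeasure_of_le ψ hmψ
    exact ⟨m.toSignedMeasure, (fst_eq_snd_iff_toSignedMeasure_prod_univ_eq m).1 hm,
      (Measure.toSignedMeasure_le_toSignedMeasure_iff _ _).2 hφm,
      (Measure.toSignedMeasure_le_toSignedMeasure_iff _ _).2 hmψ,
      (signedIntegral_toSignedMeasure m v).trans hmc⟩

end Integrality

theorem stmt_3_general {J : Type*} [MeasurableSpace J]
    (v : J × J → ℝ) (hv_meas : Measurable v) (hv_bdd : ∃ C, ∀ p, |v p| ≤ C)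
    (hv_int : ∀ p, ∃ n : ℤ, v p = n) (c : ℝ)
    (φ ψ : Measure (J × J)) [IsFiniteMeasure φ] [IsFiniteMeasure ψ]
    (hφψ : φ ≤ ψ) :
    (∃ α : SignedMeasure (J × J),
        (∀ A : Set J, MeasurableSet A → α (A ×ˢ (univ : Set J)) = α ((univ : Set J) ×ˢ A)) ∧
        φ.toSignedMeasure ≤ α ∧ α ≤ ψ.toSignedMeasure ∧
        signedIntegral α v = c) ↔
      (∀ f : J → ℤ, Measurable f → (∃ C : ℤ, ∀ x, |f x| ≤ C) →
        ((∫ p, max (((f p.1 : ℝ) - (f p.2 : ℝ)) + v p) 0 ∂ψ) ≥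
            (∫ p, max (-(((f p.1 : ℝ) - (f p.2 : ℝ)) + v p)) 0 ∂φ) + c) ∧
        ((∫ p, max (((f p.1 : ℝ) - (f p.2 : ℝ)) - v p) 0 ∂ψ) ≥
            (∫ p, max (-(((f p.1 : ℝ) - (f p.2 : ℝ)) - v p)) 0 ∂φ) - c) ∧
        ((∫ p, max ((f p.1 : ℝ) - (f p.2 : ℝ)) 0 ∂ψ) ≥
            ∫ p, max (-((f p.1 : ℝ) - (f p.2 : ℝ))) 0 ∂φ)) := by
  obtain ⟨n, rfl⟩ := exists_simpleFunc_intCast_eq hv_meas hv_bdd hv_int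
  rw [exists_signedMeasure_circulation_iff]
  refine (exists_circulation_integral_eq_iff hφψ (n.map (Int.cast : ℤ → ℝ)) c).trans ?_
  rw [forall_real_le_orderIntervalSupport_iff_forall_int, ← forall_simpleFunc_int_iff]
  simp only [forall_mem_insert, mem_singleton_iff, forall_eq, le_orderIntervalSupport_iff,
    Int.cast_one, Int.cast_neg, Int.cast_zero, one_mul, neg_one_mul, zero_mul, add_zero,
    ← sub_eq_add_neg]

/-- **Integrality supplement to the optimal circulation theorem.** If `v` is integer-valued,
then it suffices to require the three inequalities for integer-valued potentials
`F(x,y) = f(x) - f(y)` with `f : J → ℤ` bounded measurable. -/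
theorem stmt_3 {J : Type*} [MeasurableSpace J] [StandardBorelSpace J]
    (v : J × J → ℝ) (hv_meas : Measurable v) (hv_bdd : ∃ C, ∀ p, |v p| ≤ C)
    (hv_nonneg : ∀ p, 0 ≤ v p) (hv_int : ∀ p, ∃ n : ℤ, v p = n) (c : ℝ)
    (φ ψ : Measure (J × J)) [IsFiniteMeasure φ] [IsFiniteMeasure ψ]
    (hφψ : φ ≤ ψ) :
    (∃ α : SignedMeasure (J × J),
        (∀ A : Set J, MeasurableSet A → α (A ×ˢ (univ : Set J)) = α ((univ : Set J) ×ˢ A)) ∧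
        φ.toSignedMeasure ≤ α ∧ α ≤ ψ.toSignedMeasure ∧
        signedIntegral α v = c) ↔
      (∀ f : J → ℤ, Measurable f → (∃ C : ℤ, ∀ x, |f x| ≤ C) →
        ((∫ p, max (((f p.1 : ℝ) - (f p.2 : ℝ)) + v p) 0 ∂ψ) ≥
            (∫ p, max (-(((f p.1 : ℝ) - (f p.2 : ℝ)) + v p)) 0 ∂φ) + c) ∧
        ((∫ p, max (((f p.1 : ℝ) - (f p.2 : ℝ)) - v p) 0 ∂ψ) ≥
            (∫ p, max (-(((f p.1 : ℝ) - (f p.2 : ℝ)) - v p)) 0 ∂φ) - c) ∧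
        ((∫ p, max ((f p.1 : ℝ) - (f p.2 : ℝ)) 0 ∂ψ) ≥
            ∫ p, max (-((f p.1 : ℝ) - (f p.2 : ℝ))) 0 ∂φ)) :=
  stmt_3_general v hv_meas hv_bdd hv_int c φ ψ hφψ
end

section
/- Let (J, 𝒜) be a standard Borel space, let α, β be finite nonnegative Borel measures on J with α(J) = β(J), and let ψ be a finite nonnegative Borel measure on J × J. There exists a finite nonnegative Borel measure μ on J × J with marginals μ¹ = α and μ² = β and with μ ≤ ψ if and only if ψ(S × T) ≥ α(S) + β(T) − α(J) for all Borel sets S, T ⊆ J. -/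
open MeasureTheory Set

/-!
Necessity is the inclusion–exclusion bound `μ(S × T) ≥ μ(S × Y) + μ(X × T) - μ(X × Y)`.

For sufficiency, the condition says `α(S) ≤ β(T) + ψ(S × Tᶜ)`. Applying it to `S = {t < f}` and
`T = {t ≤ g}` and integrating over the levels `t` gives `∫ f dα ≤ ∫ g dβ + ∫ (f - g)⁺ dψ`, so that
`∫ u dα + ∫ v dβ ≤ ∫ (u(x) + v(y))⁺ dψ` for all bounded `u` and `v`. By Hahn–Banach the functional
`u(x) + v(y) ↦ ∫ u dα + ∫ v dβ` extends to all simple functions on `X × Y` while staying below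
`w ↦ ∫ w⁺ dψ`. This domination makes the extension positive and countably additive, hence
integration against a measure `μ ≤ ψ`, whose marginals are read off from the extension property.
-/

open scoped ENNReal Topology

theorem exists_linearMap_comp_eq_of_le_sublinear_s8 {E F : Type*} [AddCommGroup E] [Module ℝ E]
    [AddCommGroup F] [Module ℝ F] (L : E →ₗ[ℝ] F) (g : E →ₗ[ℝ] ℝ) (p : F → ℝ)
    (p_hom : ∀ c : ℝ, 0 < c → ∀ y, p (c • y) = c * p y)
    (p_add : ∀ y z, p (y + z) ≤ p y + p z) (hg : ∀ x, g x ≤ p (L x)) :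
    ∃ Λ : F →ₗ[ℝ] ℝ, Λ ∘ₗ L = g ∧ ∀ y, Λ y ≤ p y := by
  have p_zero : p 0 = 0 := by
    have := p_hom 2 two_pos 0
    rw [smul_zero] at this
    linarith
  have g_nonpos {x : E} (hx : L x = 0) : g x ≤ 0 := (hg x).trans_eq (by rw [hx, p_zero])
  have g_eq_zero : g ∈ (LinearMap.ker L).dualAnnihilator := by
    refine (Submodule.mem_dualAnnihilator g).2 fun x (hx : L x = 0) ↦ ?_
    have hneg : g (-x) ≤ 0 := g_nonpos (by rw [map_neg, hx, neg_zero])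
    rw [map_neg] at hneg
    linarith [g_nonpos hx]
  rw [← LinearMap.range_dualMap_eq_dualAnnihilator_ker] at g_eq_zero
  obtain ⟨f, rfl⟩ := g_eq_zero
  obtain ⟨Λ, hΛ, hΛp⟩ := exists_extension_of_le_sublinear
    ⟨LinearMap.range L, f.domRestrict (LinearMap.range L)⟩ p p_hom p_add
    (by rintro ⟨_, x, rfl⟩; exact hg x)
  exact ⟨Λ, LinearMap.ext fun x ↦ hΛ ⟨L x, x, rfl⟩, hΛp⟩

section PosPart

variable {Z : Type*} [MeasurableSpace Z] {ψ : Measure Z}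

theorem integrable_posPart {w : Z → ℝ} (hw : Integrable w ψ) : Integrable (fun z ↦ (w z)⁺) ψ :=
  hw.pos_part

theorem lintegral_ofReal_eq_ofReal_integral_posPart {w : Z → ℝ} (hw : Integrable w ψ) :
    ∫⁻ z, ENNReal.ofReal (w z) ∂ψ = ENNReal.ofReal (∫ z, (w z)⁺ ∂ψ) := by
  rw [ofReal_integral_eq_lintegral_ofReal (integrable_posPart hw)
    (.of_forall fun z ↦ posPart_nonneg (w z))]
  simp only [posPart_def, ENNReal.ofReal_max, ENNReal.ofReal_zero, max_zero]

theorem integral_posPart_const_mul {c : ℝ} (hc : 0 ≤ c) (w : Z → ℝ) :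
    ∫ z, (c * w z)⁺ ∂ψ = c * ∫ z, (w z)⁺ ∂ψ := by
  simp only [posPart_def, ← integral_const_mul, mul_max_of_nonneg _ _ hc, mul_zero]

theorem integral_posPart_add_le {w w' : Z → ℝ} (hw : Integrable w ψ) (hw' : Integrable w' ψ) :
    ∫ z, (w z + w' z)⁺ ∂ψ ≤ ∫ z, (w z)⁺ ∂ψ + ∫ z, (w' z)⁺ ∂ψ := by
  rw [← integral_add (integrable_posPart hw) (integrable_posPart hw')]
  refine integral_mono (integrable_posPart (hw.add hw'))
    ((integrable_posPart hw).add (integrable_posPart hw')) fun z ↦ ?_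
  exact sup_le (add_le_add (le_posPart _) (le_posPart _))
    (add_nonneg (posPart_nonneg _) (posPart_nonneg _))

end PosPart

section SimpleFunc

/-- Integration of simple functions against a finite measure, as a linear functional. -/
noncomputable def integralSimpleFunc {X : Type*} [MeasurableSpace X] (μ : Measure X)
    [IsFiniteMeasure μ] : SimpleFunc X ℝ →ₗ[ℝ] ℝ where
  toFun u := ∫ x, u x ∂μ
  map_add' u v := integral_add u.integrable_of_isFiniteMeasure v.integrable_of_isFiniteMeasure
  map_smul' c u := integral_const_mul c u

/-- Precomposition of simple functions with a measurable map, as a linear map. -/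
def compSimpleFunc {Z X : Type*} [MeasurableSpace Z] [MeasurableSpace X] (π : Z → X)
    (hπ : Measurable π) : SimpleFunc X ℝ →ₗ[ℝ] SimpleFunc Z ℝ where
  toFun u := u.comp π hπ
  map_add' _ _ := rfl
  map_smul' _ _ := rfl

theorem integral_restrict_one {X : Type*} [MeasurableSpace X] (μ : Measure X) {s : Set X}
    (hs : MeasurableSet s) : ∫ x, SimpleFunc.restrict (1 : SimpleFunc X ℝ) s x ∂μ = μ.real s := by
  rw [SimpleFunc.coe_restrict _ hs]
  exact integral_indicator_one hs

theorem compSimpleFunc_restrict_one {Z X : Type*} [MeasurableSpace Z] [MeasurableSpace X]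
    {π : Z → X} (hπ : Measurable π) {s : Set X} (hs : MeasurableSet s) :
    compSimpleFunc π hπ (.restrict 1 s) = .restrict 1 (π ⁻¹' s) := by
  refine SimpleFunc.coe_injective ?_
  rw [SimpleFunc.coe_restrict _ (hπ hs)]
  change SimpleFunc.restrict 1 s ∘ π = _
  rw [SimpleFunc.coe_restrict _ hs]
  rfl

end SimpleFunc

section Representation

variable {Z : Type*} [MeasurableSpace Z] {ψ : Measure Z} [IsFiniteMeasure ψ]

theorem exists_measure_le_of_additive {m : Set Z → ℝ≥0∞}
    (m_le : ∀ s, MeasurableSet s → m s ≤ ψ s)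
    (m_union : ∀ s t, MeasurableSet s → MeasurableSet t → Disjoint s t → m (s ∪ t) = m s + m t) :
    ∃ μ ≤ ψ, ∀ s, MeasurableSet s → μ s = m s := by
  have hring : IsSetRing {s : Set Z | MeasurableSet s} :=
    ⟨.empty, fun _ _ ↦ .union, fun _ _ ↦ .diff⟩
  have m_empty : m ∅ = 0 := le_antisymm ((m_le ∅ .empty).trans_eq measure_empty) zero_le
  let content : AddContent ℝ≥0∞ {s : Set Z | MeasurableSet s} :=
    hring.addContent_of_union m m_empty fun hs ht ↦ m_union _ _ hs ht
  have tendsto_zero ⦃s : ℕ → Set Z⦄ (hs : ∀ n, MeasurableSet (s n)) (hanti : Antitone s)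
      (hinter : ⋂ n, s n = ∅) : Filter.Tendsto (fun n ↦ m (s n)) .atTop (𝓝 0) := by
    have hψ := tendsto_measure_iInter_atTop (μ := ψ) (fun n ↦ (hs n).nullMeasurableSet) hanti
      ⟨0, measure_ne_top ψ _⟩
    rw [hinter, measure_empty] at hψ
    exact tendsto_of_tendsto_of_tendsto_of_le_of_le tendsto_const_nhds hψ
      (fun _ ↦ zero_le) fun n ↦ m_le _ (hs n)
  have m_iUnion ⦃s : ℕ → Set Z⦄ (hs : ∀ n, MeasurableSet (s n))
      (hdisj : Pairwise (Function.onFun Disjoint s)) : m (⋃ n, s n) = ∑' n, m (s n) :=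
    addContent_iUnion_eq_sum_of_tendsto_zero hring content
      (fun s hs ↦ ((m_le s hs).trans_lt (measure_lt_top ψ s)).ne) tendsto_zero hs (.iUnion hs) hdisj
  let μ : Measure Z := .ofMeasurable (fun s _ ↦ m s) m_empty m_iUnion
  have hμ (s : Set Z) (hs : MeasurableSet s) : μ s = m s := Measure.ofMeasurable_apply s hs
  exact ⟨μ, Measure.le_iff.2 fun s hs ↦ (hμ s hs).trans_le (m_le s hs), hμ⟩

theorem exists_measure_le_of_le_integral_posPart (Λ : SimpleFunc Z ℝ →ₗ[ℝ] ℝ)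
    (hΛ : ∀ w : SimpleFunc Z ℝ, Λ w ≤ ∫ z, (w z)⁺ ∂ψ) :
    ∃ μ ≤ ψ, ∀ s, MeasurableSet s → μ.real s = Λ (.restrict 1 s) := by
  have Λ_nonneg {w : SimpleFunc Z ℝ} (hw : 0 ≤ w) : 0 ≤ Λ w := by
    have hneg := hΛ (-w)
    simp only [map_neg, SimpleFunc.coe_neg, Pi.neg_apply,
      posPart_of_nonpos (neg_nonpos.2 (hw _)), integral_zero] at hneg
    exact neg_nonpos.1 hneg
  have restrict_nonneg {s : Set Z} (hs : MeasurableSet s) :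
      0 ≤ SimpleFunc.restrict (1 : SimpleFunc Z ℝ) s := fun z ↦ by
    rw [SimpleFunc.restrict_apply _ hs]
    exact indicator_nonneg (fun _ _ ↦ zero_le_one) z
  have Λ_le {s : Set Z} (hs : MeasurableSet s) : Λ (.restrict 1 s) ≤ ψ.real s := by
    refine (hΛ _).trans_eq ?_
    simp only [posPart_of_nonneg (restrict_nonneg hs _), integral_restrict_one ψ hs]
  have Λ_union (s t : Set Z) (hs : MeasurableSet s) (ht : MeasurableSet t) (hst : Disjoint s t) :
      Λ (.restrict 1 (s ∪ t)) = Λ (.restrict 1 s) + Λ (.restrict 1 t) := by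
    rw [← map_add]
    congr 1
    refine SimpleFunc.coe_injective ?_
    simp only [SimpleFunc.coe_add, SimpleFunc.coe_restrict _ hs, SimpleFunc.coe_restrict _ ht,
      SimpleFunc.coe_restrict _ (hs.union ht), indicator_union_of_disjoint hst]
    rfl
  obtain ⟨μ, μ_le, hμ⟩ := exists_measure_le_of_additive (ψ := ψ)
    (m := fun s ↦ ENNReal.ofReal (Λ (.restrict 1 s)))
    (fun s hs ↦ ENNReal.ofReal_le_of_le_toReal (Λ_le hs))
    (fun s t hs ht hst ↦ by
      rw [Λ_union s t hs ht hst, ENNReal.ofReal_add (Λ_nonneg (restrict_nonneg hs))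
        (Λ_nonneg (restrict_nonneg ht))])
  exact ⟨μ, μ_le, fun s hs ↦ by
    rw [measureReal_def, hμ s hs, ENNReal.toReal_ofReal (Λ_nonneg (restrict_nonneg hs))]⟩

theorem map_eq_of_comp_compSimpleFunc_eq {X : Type*} [MeasurableSpace X] {μ : Measure Z}
    [IsFiniteMeasure μ] {ν : Measure X} [IsFiniteMeasure ν] {π : Z → X} (hπ : Measurable π)
    {Λ : SimpleFunc Z ℝ →ₗ[ℝ] ℝ} (hμ : ∀ s, MeasurableSet s → μ.real s = Λ (.restrict 1 s))
    (hΛ : Λ ∘ₗ compSimpleFunc π hπ = integralSimpleFunc ν) : μ.map π = ν := by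
  ext s hs
  rw [Measure.map_apply hπ hs, ← measureReal_eq_measureReal_iff]
  calc μ.real (π ⁻¹' s)
      = Λ (compSimpleFunc π hπ (.restrict 1 s)) := by
        rw [hμ _ (hπ hs), compSimpleFunc_restrict_one hπ hs]
    _ = integralSimpleFunc ν (.restrict 1 s) := LinearMap.congr_fun hΛ _
    _ = ν.real s := integral_restrict_one ν hs

end Representation

section Duality

variable {X Y : Type*} [MeasurableSpace X] [MeasurableSpace Y] {α : Measure X} {β : Measure Y}
  {ψ : Measure (X × Y)}

theorem setLIntegral_measure_superlevel_prod_sublevel_le [SFinite ψ] {f : X → ℝ} {g : Y → ℝ}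
    (hf : Measurable f) (hg : Measurable g) :
    ∫⁻ t in Ioi (0 : ℝ), ψ ({x | t < f x} ×ˢ {y | t ≤ g y}ᶜ) ≤
      ∫⁻ z, ENNReal.ofReal (f z.1 - g z.2) ∂ψ := by
  have hf' : Measurable fun z : X × Y ↦ f z.1 := hf.comp measurable_fst
  have hg' : Measurable fun z : X × Y ↦ g z.2 := hg.comp measurable_snd
  calc ∫⁻ t in Ioi (0 : ℝ), ψ ({x | t < f x} ×ˢ {y | t ≤ g y}ᶜ)
      ≤ ∫⁻ t : ℝ, ψ ({x | t < f x} ×ˢ {y | t ≤ g y}ᶜ) := setLIntegral_le_lintegral _ _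
    _ = ψ.prod volume (regionBetween (fun z ↦ g z.2) (fun z ↦ f z.1) univ) := by
        rw [Measure.prod_apply_symm (measurableSet_regionBetween hg' hf' .univ)]
        refine lintegral_congr fun t ↦ congrArg ψ ?_
        ext z
        simp [regionBetween, and_comm]
    _ = ∫⁻ z, ENNReal.ofReal (f z.1 - g z.2) ∂ψ := by
        rw [volume_regionBetween_eq_lintegral hg'.aemeasurable hf'.aemeasurable .univ,
          setLIntegral_univ]
        rfl

theorem lintegral_le_lintegral_add_lintegral_sub [SFinite ψ]
    (h : ∀ S T, MeasurableSet S → MeasurableSet T → α S ≤ β T + ψ (S ×ˢ Tᶜ))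
    {f : X → ℝ} {g : Y → ℝ} (hf : Measurable f) (hg : Measurable g) (f_nonneg : ∀ x, 0 ≤ f x)
    (g_nonneg : ∀ y, 0 ≤ g y) :
    ∫⁻ x, ENNReal.ofReal (f x) ∂α ≤
      ∫⁻ y, ENNReal.ofReal (g y) ∂β + ∫⁻ z, ENNReal.ofReal (f z.1 - g z.2) ∂ψ := by
  have β_antitone : Antitone fun t ↦ β {y | t ≤ g y} :=
    fun s t hst ↦ measure_mono fun y hy ↦ hst.trans hy
  calc ∫⁻ x, ENNReal.ofReal (f x) ∂α
      = ∫⁻ t in Ioi 0, α {x | t < f x} :=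
        lintegral_eq_lintegral_meas_lt α (.of_forall f_nonneg) hf.aemeasurable
    _ ≤ ∫⁻ t in Ioi 0, (β {y | t ≤ g y} + ψ ({x | t < f x} ×ˢ {y | t ≤ g y}ᶜ)) :=
        lintegral_mono fun t ↦
          h _ _ (measurableSet_lt measurable_const hf) (measurableSet_le measurable_const hg)
    _ = ∫⁻ y, ENNReal.ofReal (g y) ∂β +
          ∫⁻ t in Ioi 0, ψ ({x | t < f x} ×ˢ {y | t ≤ g y}ᶜ) := by
        rw [lintegral_add_left β_antitone.measurable,
          lintegral_eq_lintegral_meas_le β (.of_forall g_nonneg) hg.aemeasurable]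
    _ ≤ ∫⁻ y, ENNReal.ofReal (g y) ∂β + ∫⁻ z, ENNReal.ofReal (f z.1 - g z.2) ∂ψ := by
        gcongr
        exact setLIntegral_measure_superlevel_prod_sublevel_le hf hg

theorem integral_le_integral_add_integral_posPart_sub [SFinite ψ]
    (h : ∀ S T, MeasurableSet S → MeasurableSet T → α S ≤ β T + ψ (S ×ˢ Tᶜ))
    {f : X → ℝ} {g : Y → ℝ} (hf : Measurable f) (hg : Measurable g) (f_int : Integrable f α)
    (g_int : Integrable g β) (fg_int : Integrable (fun z ↦ f z.1 - g z.2) ψ)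
    (f_nonneg : ∀ x, 0 ≤ f x) (g_nonneg : ∀ y, 0 ≤ g y) :
    ∫ x, f x ∂α ≤ ∫ y, g y ∂β + ∫ z, (f z.1 - g z.2)⁺ ∂ψ := by
  have posPart_integral_nonneg : 0 ≤ ∫ z, (f z.1 - g z.2)⁺ ∂ψ :=
    integral_nonneg fun z ↦ posPart_nonneg (f z.1 - g z.2)
  have key := lintegral_le_lintegral_add_lintegral_sub h hf hg f_nonneg g_nonneg
  rwa [← ofReal_integral_eq_lintegral_ofReal f_int (.of_forall f_nonneg),
    ← ofReal_integral_eq_lintegral_ofReal g_int (.of_forall g_nonneg),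
    lintegral_ofReal_eq_ofReal_integral_posPart fg_int,
    ← ENNReal.ofReal_add (integral_nonneg g_nonneg) posPart_integral_nonneg,
    ENNReal.ofReal_le_ofReal_iff
      (add_nonneg (integral_nonneg g_nonneg) posPart_integral_nonneg)] at key

variable [IsFiniteMeasure α] [IsFiniteMeasure β] [IsFiniteMeasure ψ]

theorem integral_add_integral_le_integral_posPart_add (hαβ : α univ = β univ)
    (h : ∀ S T, MeasurableSet S → MeasurableSet T → α S ≤ β T + ψ (S ×ˢ Tᶜ))
    {u : X → ℝ} {v : Y → ℝ} (hu : Measurable u) (hv : Measurable v) {C : ℝ}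
    (hu_le : ∀ x, |u x| ≤ C) (hv_le : ∀ y, |v y| ≤ C) :
    ∫ x, u x ∂α + ∫ y, v y ∂β ≤ ∫ z, (u z.1 + v z.2)⁺ ∂ψ := by
  have u_int : Integrable u α := .of_bound hu.aestronglyMeasurable C (.of_forall hu_le)
  have v_int : Integrable v β := .of_bound hv.aestronglyMeasurable C (.of_forall hv_le)
  have sub_eq (z : X × Y) : u z.1 + C - (C - v z.2) = u z.1 + v z.2 := by ring
  have sub_int : Integrable (fun z : X × Y ↦ u z.1 + C - (C - v z.2)) ψ := by
    simp only [sub_eq]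
    refine .of_bound (by fun_prop) (C + C) (.of_forall fun z ↦ ?_)
    exact (abs_add_le _ _).trans (add_le_add (hu_le _) (hv_le _))
  have shifted := integral_le_integral_add_integral_posPart_sub h (hu.add_const C)
    (hv.const_sub C) (u_int.add (integrable_const C)) ((integrable_const C).sub v_int) sub_int
    (fun x ↦ by linarith [neg_le_of_abs_le (hu_le x)])
    (fun y ↦ sub_nonneg.2 (le_of_abs_le (hv_le y)))
  have hmass : α.real univ = β.real univ := congrArg ENNReal.toReal hαβ
  rw [integral_add u_int (integrable_const C), integral_sub (integrable_const C) v_int,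
    integral_const, integral_const, hmass] at shifted
  simp only [sub_eq] at shifted
  linarith

theorem exists_linearMap_simpleFunc_le_integral_posPart (hαβ : α univ = β univ)
    (h : ∀ S T, MeasurableSet S → MeasurableSet T → α S ≤ β T + ψ (S ×ˢ Tᶜ)) :
    ∃ Λ : SimpleFunc (X × Y) ℝ →ₗ[ℝ] ℝ,
      Λ ∘ₗ compSimpleFunc Prod.fst measurable_fst = integralSimpleFunc α ∧
      Λ ∘ₗ compSimpleFunc Prod.snd measurable_snd = integralSimpleFunc β ∧
      ∀ w, Λ w ≤ ∫ z, (w z)⁺ ∂ψ := by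
  obtain ⟨Λ, hΛ, hΛ_le⟩ := exists_linearMap_comp_eq_of_le_sublinear_s8
    ((compSimpleFunc Prod.fst measurable_fst).coprod (compSimpleFunc Prod.snd measurable_snd))
    ((integralSimpleFunc α).coprod (integralSimpleFunc β))
    (fun w ↦ ∫ z, (w z)⁺ ∂ψ)
    (fun c hc w ↦ integral_posPart_const_mul hc.le w)
    (fun w w' ↦ integral_posPart_add_le w.integrable_of_isFiniteMeasure
      w'.integrable_of_isFiniteMeasure)
    (fun ⟨u, v⟩ ↦ by
      obtain ⟨A, hA⟩ := u.exists_forall_norm_le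
      obtain ⟨B, hB⟩ := v.exists_forall_norm_le
      exact integral_add_integral_le_integral_posPart_add hαβ h u.measurable v.measurable
        (fun x ↦ (hA x).trans (le_max_left A B)) (fun y ↦ (hB y).trans (le_max_right A B)))
  obtain ⟨hΛ_inl, hΛ_inr⟩ := LinearMap.prod_ext_iff.1 hΛ
  rw [LinearMap.comp_assoc, LinearMap.coprod_inl, LinearMap.coprod_inl] at hΛ_inl
  rw [LinearMap.comp_assoc, LinearMap.coprod_inr, LinearMap.coprod_inr] at hΛ_inr
  exact ⟨Λ, hΛ_inl, hΛ_inr, hΛ_le⟩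

end Duality

section Transshipment

variable {X Y : Type*} [MeasurableSpace X] [MeasurableSpace Y]

theorem measureReal_fst_add_snd_sub_univ_le (μ : Measure (X × Y)) [IsFiniteMeasure μ] {S : Set X}
    {T : Set Y} (hS : MeasurableSet S) (hT : MeasurableSet T) :
    μ.fst.real S + μ.snd.real T - μ.real univ ≤ μ.real (S ×ˢ T) := by
  have incl_excl := measureReal_union_add_inter (μ := μ) (s := Prod.fst ⁻¹' S)
    (measurable_snd hT)
  have union_le : μ.real (Prod.fst ⁻¹' S ∪ Prod.snd ⁻¹' T) ≤ μ.real univ :=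
    measureReal_mono (subset_univ _)
  rw [← prod_eq] at incl_excl
  rw [measureReal_def μ.fst, measureReal_def μ.snd, Measure.fst_apply hS, Measure.snd_apply hT,
    ← measureReal_def, ← measureReal_def]
  linarith

theorem measure_le_add_prod_compl {α : Measure X} {β : Measure Y} {ψ : Measure (X × Y)}
    [IsFiniteMeasure α] [IsFiniteMeasure β] [IsFiniteMeasure ψ] (hαβ : α univ = β univ)
    (h : ∀ S T, MeasurableSet S → MeasurableSet T →
      α.real S + β.real T - α.real univ ≤ ψ.real (S ×ˢ T))
    {S : Set X} {T : Set Y} (hS : MeasurableSet S) (hT : MeasurableSet T) :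
    α S ≤ β T + ψ (S ×ˢ Tᶜ) := by
  have hmass : α.real univ = β.real univ := congrArg ENNReal.toReal hαβ
  have hcompl := h S Tᶜ hS hT.compl
  rw [measureReal_compl hT, hmass] at hcompl
  rw [← ENNReal.toReal_le_toReal (by finiteness) (by finiteness),
    ENNReal.toReal_add (by finiteness) (by finiteness)]
  simp only [← measureReal_def]
  linarith

theorem stmt_8_general (α : Measure X) (β : Measure Y) [IsFiniteMeasure α] [IsFiniteMeasure β]
    (hαβ : α univ = β univ) (ψ : Measure (X × Y)) [IsFiniteMeasure ψ] :
    (∃ μ : Measure (X × Y), μ.fst = α ∧ μ.snd = β ∧ μ ≤ ψ) ↔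
      ∀ S T, MeasurableSet S → MeasurableSet T →
        α.real S + β.real T - α.real univ ≤ ψ.real (S ×ˢ T) := by
  constructor
  · rintro ⟨μ, rfl, rfl, hμ⟩ S T hS hT
    have : IsFiniteMeasure μ := isFiniteMeasure_of_le ψ hμ
    have h_univ : μ.fst.real univ = μ.real univ := congrArg ENNReal.toReal Measure.fst_univ
    rw [h_univ]
    exact (measureReal_fst_add_snd_sub_univ_le μ hS hT).trans
      (ENNReal.toReal_mono (measure_ne_top ψ _) (hμ _))
  · intro h
    obtain ⟨Λ, hΛ_fst, hΛ_snd, hΛ_le⟩ := exists_linearMap_simpleFunc_le_integral_posPart hαβ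
      fun S T ↦ measure_le_add_prod_compl hαβ h
    obtain ⟨μ, hμ_le, hμ⟩ := exists_measure_le_of_le_integral_posPart Λ hΛ_le
    have : IsFiniteMeasure μ := isFiniteMeasure_of_le ψ hμ_le
    exact ⟨μ, map_eq_of_comp_compSimpleFunc_eq measurable_fst hμ hΛ_fst,
      map_eq_of_comp_compSimpleFunc_eq measurable_snd hμ hΛ_snd, hμ_le⟩

end Transshipment

/-- **Feasible transshipment theorem.** Given finite nonnegative measures `α, β` on `J` with
`α(J) = β(J)` and a finite capacity measure `ψ` on `J × J`, there exists an `α`-`β`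
transshipment `μ` (i.e. `μ¹ = α`, `μ² = β`) with `μ ≤ ψ` iff
`ψ(S × T) ≥ α(S) + β(T) - α(J)` for all Borel sets `S, T`. -/
theorem stmt_8 {J : Type*} [MeasurableSpace J] [StandardBorelSpace J]
    (α β : Measure J) [IsFiniteMeasure α] [IsFiniteMeasure β]
    (hαβ : α univ = β univ)
    (ψ : Measure (J × J)) [IsFiniteMeasure ψ] :
    (∃ μ : Measure (J × J), μ.fst = α ∧ μ.snd = β ∧ μ ≤ ψ) ↔
      (∀ S T : Set J, MeasurableSet S → MeasurableSet T →
        (α S).toReal + (β T).toReal - (α univ).toReal ≤ (ψ (S ×ˢ T)).toReal) := by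
  exact stmt_8_general α β hαβ ψ
end
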